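/- arXiv:1110.3265 — 2 statements merged into one kernel-verified Lean document; each statement's English description precedes it below -/
import Mathlib

section
/- Let k ≥ 2, let X = (X_1,…,X_k) follow the negative multinomial distribution NM_k(r,θ), and let g : ℕ^k → ℝ be such that E|X_j g(X)| < ∞ and E|X_j Δ_i g(X)| < ∞ for all i, j = 1,…,k. Then for every integer x_k ≥ 0, E[g(X) | X_k = x_k + 1] − E[g(X) | X_k = x_k] = E[ w_{-k|k}(X) · ( Δ_k g(X) + α_k Σ_{i=1}^{k-1} c_{i|k} Δ_i g(X) ) | X_k = x_k ], where α_k := (θ_0+θ_k)/(r+x_k), c_{i|k} := Σ_{j=1}^{k-1} Cov(X_i, X_j | X_k = x_k), and w_{-k|k} is the conditional negative multinomial w-function. -/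
/-!
Condition on `X_L = n` and write `S_n(f) = ∑_{x_L = n} p(x) f(x)` for the unnormalised conditional
expectation, `N(x) = r + ∑ x_i`, `R = r + n`, `q = θ₀ + θ_L` and `s = ∑_{i ≠ L} θ_i = 1 - q`.
Everything follows from the one-step recursion `p(x + e_i) (x_i + 1) = p(x) N(x) θ_i`
(`pmf_shift`). Summed over a slice it gives (`slice_shift`, `slice_shift_last`)

* `θ_i S_n(N f(· + e_i)) = S_n(x_i f)` for `i ≠ L`,
* `θ_L S_n(N f(· + e_L)) = (n + 1) S_{n+1}(f)`.

Adding the first over `i ≠ L` gives `∑_{i ≠ L} θ_i S_n(N f(· + e_i)) = S_n(N f) - R S_n(f)`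
(`slice_shift_sum`). Taking `f = 1` yields `q S_n(N) = R S_n(1)` and hence the ratio of the masses
of consecutive slices; `f = x_i` yields the covariances in the form `c_i = θ_i R / q²`, so that
`α c_i = θ_i / q`. The right-hand side of the theorem then becomes
`(q S_n(N Δ_L g) + ∑_{i ≠ L} θ_i S_n(N Δ_i g)) / (R S_n(1))`, in which the `S_n(N g)` terms cancel
because `q + s = 1`, leaving the difference of the two conditional expectations.

The only analytic input is absolute summability: second moments of `p` are finite by comparison
with a negative binomial series, through the multinomial theorem (`summable_second_moment`), and
the integrability of `X_j g(X)` for all `j` implies that of `g(X)` because `x = 0` is a single atom.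
-/

open scoped BigOperators

/-- The p.m.f. of the negative multinomial distribution `NM_k(r, θ)` on `ℕ^k`. -/
noncomputable def negMultPMF (k r : ℕ) (θ : Fin k → ℝ) (x : Fin k → ℕ) : ℝ :=
  (Nat.factorial (r + ∑ i, x i - 1) : ℝ) /
      ((∏ i, (Nat.factorial (x i) : ℝ)) * (Nat.factorial (r - 1) : ℝ)) *
    (∏ i, θ i ^ x i) * (1 - ∑ i, θ i) ^ r

/-- Forward difference `Δ_i g (x) = g (x + e_i) - g x`. -/
def fd {k : ℕ} (g : (Fin k → ℕ) → ℝ) (i : Fin k) (x : Fin k → ℕ) : ℝ :=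
  g (Function.update x i (x i + 1)) - g x

/-- Conditional expectation `E[f(X) | X_L = xk]` for a discrete random vector `X` on `ℕ^k`
with p.m.f. `p`. -/
noncomputable def condE (k : ℕ) (p : (Fin k → ℕ) → ℝ) (L : Fin k) (xk : ℕ)
    (f : (Fin k → ℕ) → ℝ) : ℝ :=
  (∑' x : Fin k → ℕ, if x L = xk then p x * f x else 0) /
    (∑' x : Fin k → ℕ, if x L = xk then p x else 0)

/-- Conditional covariance `Cov(f(X), h(X) | X_L = xk)`. -/
noncomputable def condCov (k : ℕ) (p : (Fin k → ℕ) → ℝ) (L : Fin k) (xk : ℕ)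
    (f h : (Fin k → ℕ) → ℝ) : ℝ :=
  condE k p L xk (fun x => f x * h x) - condE k p L xk f * condE k p L xk h

/-- The conditional negative multinomial `w`-function `w_{-k|k}`. -/
noncomputable def negCondW (k r : ℕ) (θ : Fin k → ℝ) (L : Fin k) (x : Fin k → ℕ) : ℝ :=
  ((1 - ∑ i, θ i) + θ L) * ((r : ℝ) + ∑ i, (x i : ℝ)) / ((r : ℝ) + (x L : ℝ))

/-! ### The probability mass function -/

/-- The one-step recursion of the negative multinomial p.m.f. -/
lemma pmf_shift {k r : ℕ} (hr : 1 ≤ r) (θ : Fin k → ℝ) (x : Fin k → ℕ) (i : Fin k) :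
    negMultPMF k r θ (Function.update x i (x i + 1)) * ((x i : ℝ) + 1)
      = negMultPMF k r θ x * ((r : ℝ) + ∑ j, (x j : ℝ)) * θ i := by
  obtain ⟨s, rfl⟩ : ∃ s, r = s + 1 := ⟨r - 1, by omega⟩
  have hsum : ∑ j, Function.update x i (x i + 1) j = ∑ j, x j + 1 := by
    rw [← Finset.add_sum_erase _ _ (Finset.mem_univ i),
      ← Finset.add_sum_erase _ x (Finset.mem_univ i),
      Finset.sum_congr rfl (g := x)
        (fun j hj => Function.update_of_ne (Finset.ne_of_mem_erase hj) _ _)]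
    simp only [Function.update_self]
    ring
  have hfac : ∏ j, (Nat.factorial (Function.update x i (x i + 1) j) : ℝ)
      = ((x i : ℝ) + 1) * ∏ j, (Nat.factorial (x j) : ℝ) := by
    rw [← Finset.mul_prod_erase _ _ (Finset.mem_univ i),
      ← Finset.mul_prod_erase _ (fun j => (Nat.factorial (x j) : ℝ)) (Finset.mem_univ i),
      Finset.prod_congr rfl (g := fun j => (Nat.factorial (x j) : ℝ))
        (fun j hj => by rw [Function.update_of_ne (Finset.ne_of_mem_erase hj)])]
    simp only [Function.update_self, Nat.factorial_succ]
    push_cast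
    ring
  have hpow : ∏ j, θ j ^ Function.update x i (x i + 1) j = θ i * ∏ j, θ j ^ x j := by
    rw [← Finset.mul_prod_erase _ _ (Finset.mem_univ i),
      ← Finset.mul_prod_erase _ (fun j => θ j ^ x j) (Finset.mem_univ i),
      Finset.prod_congr rfl (g := fun j => θ j ^ x j)
        (fun j hj => by rw [Function.update_of_ne (Finset.ne_of_mem_erase hj)])]
    simp only [Function.update_self]
    ring
  have h1 : s + 1 + (∑ j, x j + 1) - 1 = (s + ∑ j, x j) + 1 := by omega
  have h2 : s + 1 + ∑ j, x j - 1 = s + ∑ j, x j := by omega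
  unfold negMultPMF
  rw [hsum, hfac, hpow, h1, h2, Nat.factorial_succ]
  have hP : (∏ j, (Nat.factorial (x j) : ℝ)) ≠ 0 :=
    Finset.prod_ne_zero_iff.2 fun j _ => by positivity
  have hx : (x i : ℝ) + 1 ≠ 0 := by positivity
  push_cast
  field_simp
  ring

lemma pmf_pos {k r : ℕ} {θ : Fin k → ℝ} (hθ : ∀ i, 0 < θ i ∧ θ i < 1)
    (hθ0 : 0 < 1 - ∑ i, θ i) (x : Fin k → ℕ) : 0 < negMultPMF k r θ x := by
  have h1 : 0 < ∏ i, θ i ^ x i := Finset.prod_pos fun i _ => pow_pos (hθ i).1 _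
  have h2 : 0 < ∏ j, (Nat.factorial (x j) : ℝ) := Finset.prod_pos fun j _ => by positivity
  unfold negMultPMF
  positivity

/-- Finiteness of second moments. On the level set `∑ x_i = m` the multinomial theorem collapses
the sum to a term of the negative binomial series with parameter `r + 2`. -/
lemma summable_second_moment {k r : ℕ} (hr : 1 ≤ r) {θ : Fin k → ℝ}
    (hθ : ∀ i, 0 < θ i ∧ θ i < 1) (hθ0 : 0 < 1 - ∑ i, θ i) :
    Summable fun x : Fin k → ℕ => negMultPMF k r θ x *
      (((r : ℝ) + ∑ j, (x j : ℝ)) * ((r : ℝ) + ∑ j, (x j : ℝ) + 1)) := by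
  obtain ⟨s, rfl⟩ : ∃ s, r = s + 1 := ⟨r - 1, by omega⟩
  set t := ∑ i, θ i with ht
  have ht0 : 0 ≤ t := Finset.sum_nonneg fun i _ => (hθ i).1.le
  set C : ℝ := (s + 1) * (s + 2) * (1 - t) ^ (s + 1) with hC
  have hgeo : Summable fun m : ℕ => ((m + (s + 2)).choose (s + 2) : ℝ) * t ^ m :=
    summable_choose_mul_geometric_of_norm_lt_one (s + 2)
      (by rw [Real.norm_of_nonneg ht0]; linarith)
  set a : ℕ → ℝ := fun m => C * (((m + (s + 2)).choose (s + 2) : ℝ) * t ^ m) with ha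
  have hasum : Summable a := hgeo.mul_left C
  have ha0 : ∀ m, 0 ≤ a m := fun m => by
    have : 0 < 1 - t := hθ0
    positivity
  set F : (Fin k → ℕ) → ℝ := fun x => negMultPMF k (s + 1) θ x *
      ((((s + 1 : ℕ) : ℝ) + ∑ j, (x j : ℝ)) * (((s + 1 : ℕ) : ℝ) + ∑ j, (x j : ℝ) + 1)) with hF
  have hF0 : ∀ x, 0 ≤ F x := fun x => by
    have := pmf_pos (r := s + 1) hθ hθ0 x
    positivity
  have hlevel : ∀ m, ∑ x ∈ Finset.piAntidiag Finset.univ m, F x = a m := by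
    intro m
    have hterm : ∀ x ∈ Finset.piAntidiag (Finset.univ : Finset (Fin k)) m,
        F x = C * ((m + (s + 2)).choose (s + 2) : ℝ) *
          (Nat.multinomial Finset.univ x * ∏ i, θ i ^ x i) := by
      intro x hx
      have hxm : ∑ j, x j = m := by simpa using hx
      have hxm' : ∑ j, (x j : ℝ) = m := by exact_mod_cast hxm
      have hmul : (∏ j, (Nat.factorial (x j) : ℝ)) * Nat.multinomial Finset.univ x
          = Nat.factorial m := by
        rw [← hxm]
        exact_mod_cast Nat.multinomial_spec Finset.univ x
      have hP : (∏ j, (Nat.factorial (x j) : ℝ)) ≠ 0 :=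
        Finset.prod_ne_zero_iff.2 fun j _ => by positivity
      have hch : ((m + (s + 2)).choose (s + 2) : ℝ) * Nat.factorial m * Nat.factorial (s + 2)
          = Nat.factorial (m + (s + 2)) := by
        have := Nat.add_choose_mul_factorial_mul_factorial m (s + 2)
        exact_mod_cast this
      have hbig : (Nat.factorial (m + (s + 2)) : ℝ)
          = (s + 1 + m + 1) * ((s + 1 + m) * Nat.factorial (s + m)) := by
        have : m + (s + 2) = (s + m) + 1 + 1 := by ring
        rw [this, Nat.factorial_succ, Nat.factorial_succ]
        push_cast
        ring
      have hs : (Nat.factorial (s + 2) : ℝ) = (s + 2) * ((s + 1) * Nat.factorial s) := by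
        rw [Nat.factorial_succ, Nat.factorial_succ]
        push_cast
        ring
      have h2 : s + 1 + ∑ j, x j - 1 = s + m := by omega
      have hs0 : (Nat.factorial s : ℝ) ≠ 0 := by positivity
      simp only [hF, negMultPMF, h2, hxm', ← ht, hC, Nat.add_sub_cancel]
      rw [hs, hbig, ← hmul] at hch
      push_cast
      rw [div_mul_eq_mul_div, div_mul_eq_mul_div, div_mul_eq_mul_div,
        div_eq_iff (mul_ne_zero hP hs0)]
      linear_combination (-(∏ i, θ i ^ x i) * (1 - t) ^ (s + 1)) * hch
    rw [Finset.sum_congr rfl hterm, ← Finset.mul_sum, ← Finset.sum_pow_eq_sum_piAntidiag, ← ht,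
      ha]
    ring
  refine summable_of_sum_le (c := ∑' m, a m) hF0 fun u => ?_
  have hmaps : ∀ x ∈ u, ∑ j, x j ∈ u.image fun x => ∑ j, x j :=
    fun x hx => Finset.mem_image_of_mem _ hx
  rw [← Finset.sum_fiberwise_of_maps_to hmaps]
  refine le_trans (Finset.sum_le_sum fun m _ => ?_) (hasum.sum_le_tsum _ fun m _ => ha0 m)
  rw [← hlevel m]
  refine Finset.sum_le_sum_of_subset_of_nonneg (fun x hx => ?_) fun x _ _ => hF0 x
  simpa using (Finset.mem_filter.1 hx).2

/-! ### Sums over a slice -/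

/-- The unnormalised conditional expectation `∑_{x_L = n} p(x) f(x)`. -/
noncomputable def sliceSum {k : ℕ} (p : (Fin k → ℕ) → ℝ) (L : Fin k) (n : ℕ)
    (f : (Fin k → ℕ) → ℝ) : ℝ :=
  ∑' x : Fin k → ℕ, if x L = n then p x * f x else 0

section Slice

variable {k : ℕ} {p : (Fin k → ℕ) → ℝ} {L : Fin k} {n : ℕ}

lemma condE_eq (f : (Fin k → ℕ) → ℝ) :
    condE k p L n f = sliceSum p L n f / sliceSum p L n (fun _ => 1) := by
  simp [condE, sliceSum]

lemma summable_slice {f : (Fin k → ℕ) → ℝ} (hf : Summable fun x => p x * f x) :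
    Summable fun x : Fin k → ℕ => if x L = n then p x * f x else 0 := by
  refine (hf.indicator {x | x L = n}).congr fun x => ?_
  by_cases hx : x L = n <;> simp [hx]

lemma slice_congr {f h : (Fin k → ℕ) → ℝ} (H : ∀ x, x L = n → f x = h x) :
    sliceSum p L n f = sliceSum p L n h := by
  refine tsum_congr fun x => ?_
  split_ifs with hx
  · rw [H x hx]
  · rfl

lemma slice_add {f h : (Fin k → ℕ) → ℝ} (hf : Summable fun x => p x * f x)
    (hh : Summable fun x => p x * h x) :
    sliceSum p L n (fun x => f x + h x) = sliceSum p L n f + sliceSum p L n h := by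
  unfold sliceSum
  rw [← (summable_slice hf).tsum_add (summable_slice hh)]
  refine tsum_congr fun x => ?_
  split_ifs <;> ring

lemma slice_const_mul (c : ℝ) (f : (Fin k → ℕ) → ℝ) :
    sliceSum p L n (fun x => c * f x) = c * sliceSum p L n f := by
  unfold sliceSum
  rw [← tsum_mul_left]
  refine tsum_congr fun x => ?_
  split_ifs <;> ring

lemma slice_sum {ι : Type*} (s : Finset ι) {f : ι → (Fin k → ℕ) → ℝ}
    (hf : ∀ i ∈ s, Summable fun x => p x * f i x) :
    sliceSum p L n (fun x => ∑ i ∈ s, f i x) = ∑ i ∈ s, sliceSum p L n (f i) := by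
  unfold sliceSum
  rw [← Summable.tsum_finsetSum fun i hi => summable_slice (hf i hi)]
  refine tsum_congr fun x => ?_
  split_ifs
  · rw [Finset.mul_sum]
  · simp

end Slice

/-! ### Shift relations -/

lemma update_succ_injective {k : ℕ} (i : Fin k) :
    Function.Injective fun x : Fin k → ℕ => Function.update x i (x i + 1) := by
  intro x y h
  funext j
  have hj := congrFun h j
  by_cases hji : j = i
  · subst hji
    simpa using hj
  · simpa [Function.update_of_ne hji] using hj

/-- The points with positive `i`-th coordinate are those of the form `x + e_i`. -/
lemma mem_range_update_succ {k : ℕ} {i : Fin k} {z : Fin k → ℕ} (hz : z i ≠ 0) :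
    z ∈ Set.range fun x : Fin k → ℕ => Function.update x i (x i + 1) := by
  refine ⟨Function.update z i (z i - 1), ?_⟩
  simp [Nat.sub_add_cancel (Nat.one_le_iff_ne_zero.2 hz)]

section Shift

variable {k r : ℕ} {θ : Fin k → ℝ} {L : Fin k} {n : ℕ}

lemma summable_shift (hr : 1 ≤ r) {i : Fin k} (hi : 0 < θ i) {f : (Fin k → ℕ) → ℝ}
    (hf : Summable fun x : Fin k → ℕ => negMultPMF k r θ x * ((x i : ℝ) * f x)) :
    Summable fun x : Fin k → ℕ => negMultPMF k r θ x *
      (((r : ℝ) + ∑ j, (x j : ℝ)) * f (Function.update x i (x i + 1))) := by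
  have h := (hf.comp_injective (update_succ_injective i)).mul_left (θ i)⁻¹
  refine h.congr fun x => ?_
  have := pmf_shift hr θ x i
  simp only [Function.comp_apply, Function.update_self]
  push_cast
  rw [inv_mul_eq_iff_eq_mul₀ hi.ne']
  linear_combination f (Function.update x i (x i + 1)) * this

/-- Size-biasing in a coordinate other than the conditioned one stays in the same slice. -/
lemma slice_shift (hr : 1 ≤ r) {i : Fin k} (hiL : i ≠ L) (f : (Fin k → ℕ) → ℝ) :
    θ i * sliceSum (negMultPMF k r θ) L n
        (fun x => ((r : ℝ) + ∑ j, (x j : ℝ)) * f (Function.update x i (x i + 1)))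
      = sliceSum (negMultPMF k r θ) L n (fun x => (x i : ℝ) * f x) := by
  unfold sliceSum
  rw [← tsum_mul_left, ← (update_succ_injective i).tsum_eq (f := fun x : Fin k → ℕ =>
    if x L = n then negMultPMF k r θ x * ((x i : ℝ) * f x) else 0)]
  · refine tsum_congr fun x => ?_
    have := pmf_shift hr θ x i
    simp only [Function.update_self, Function.update_of_ne hiL.symm]
    split_ifs
    · push_cast
      linear_combination -f (Function.update x i (x i + 1)) * this
    · simp
  · intro z hz
    refine mem_range_update_succ fun h0 => hz ?_
    simp [h0]

/-- Size-biasing in the conditioned coordinate moves to the next slice. -/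
lemma slice_shift_last (hr : 1 ≤ r) (f : (Fin k → ℕ) → ℝ) :
    θ L * sliceSum (negMultPMF k r θ) L n
        (fun x => ((r : ℝ) + ∑ j, (x j : ℝ)) * f (Function.update x L (x L + 1)))
      = ((n : ℝ) + 1) * sliceSum (negMultPMF k r θ) L (n + 1) f := by
  unfold sliceSum
  rw [← tsum_mul_left, ← tsum_mul_left,
    ← (update_succ_injective L).tsum_eq (f := fun x : Fin k → ℕ =>
      ((n : ℝ) + 1) * if x L = n + 1 then negMultPMF k r θ x * f x else 0)]
  · refine tsum_congr fun x => ?_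
    have := pmf_shift hr θ x L
    simp only [Function.update_self, add_left_inj]
    split_ifs with hx
    · rw [hx] at this ⊢
      linear_combination -f (Function.update x L (n + 1)) * this
    · simp
  · intro z hz
    refine mem_range_update_succ fun h0 => hz ?_
    simp [h0]

lemma total_eq (x : Fin k → ℕ) (hx : x L = n) :
    ∑ i ∈ Finset.univ.erase L, (x i : ℝ)
      = ((r : ℝ) + ∑ j, (x j : ℝ)) - ((r : ℝ) + n) := by
  rw [← Finset.add_sum_erase _ (fun j => (x j : ℝ)) (Finset.mem_univ L), hx]
  ring

lemma summable_total {p : (Fin k → ℕ) → ℝ} {f : (Fin k → ℕ) → ℝ}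
    (hf : Summable fun x => p x * f x)
    (hxf : ∀ i, Summable fun x : Fin k → ℕ => p x * ((x i : ℝ) * f x)) :
    Summable fun x : Fin k → ℕ => p x * (((r : ℝ) + ∑ j, (x j : ℝ)) * f x) := by
  have h := (hf.mul_left (r : ℝ)).add (summable_sum (s := Finset.univ) fun i _ => hxf i)
  refine h.congr fun x => ?_
  rw [← Finset.mul_sum, ← Finset.sum_mul]
  ring

/-- The first shift relation summed over all coordinates but the conditioned one. -/
lemma slice_shift_sum (hr : 1 ≤ r) {f : (Fin k → ℕ) → ℝ}
    (hf : Summable fun x => negMultPMF k r θ x * f x)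
    (hxf : ∀ i, Summable fun x : Fin k → ℕ => negMultPMF k r θ x * ((x i : ℝ) * f x)) :
    ∑ i ∈ Finset.univ.erase L, θ i * sliceSum (negMultPMF k r θ) L n
        (fun x => ((r : ℝ) + ∑ j, (x j : ℝ)) * f (Function.update x i (x i + 1)))
      = sliceSum (negMultPMF k r θ) L n (fun x => ((r : ℝ) + ∑ j, (x j : ℝ)) * f x)
        - ((r : ℝ) + n) * sliceSum (negMultPMF k r θ) L n f := by
  rw [Finset.sum_congr rfl fun i hi => slice_shift hr (Finset.ne_of_mem_erase hi) f,
    ← slice_sum _ fun i _ => hxf i,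
    slice_congr (h := fun x => ((r : ℝ) + ∑ j, (x j : ℝ)) * f x + (-((r : ℝ) + n)) * f x),
    slice_add (summable_total hf hxf), slice_const_mul]
  · ring
  · refine (hf.mul_left (-((r : ℝ) + n))).congr fun x => ?_
    ring
  · intro x hx
    rw [← Finset.sum_mul, total_eq (r := r) x hx]
    ring

end Shift

/-! ### Positivity and integrability -/

lemma slice_mass_pos {k : ℕ} {p : (Fin k → ℕ) → ℝ} (hp : ∀ x, 0 < p x) (hs : Summable p)
    (L : Fin k) (n : ℕ) : 0 < sliceSum p L n (fun _ => 1) := by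
  refine Summable.tsum_pos (summable_slice (by simpa using hs)) (fun x => ?_)
    (Function.update 0 L n) ?_
  · split_ifs
    · simpa using (hp x).le
    · rfl
  · simpa using hp _

/-- If `X_j g(X)` is integrable for every `j`, so is `g(X)`: outside the single point `0` some
coordinate is at least `1`. -/
lemma summable_of_coord {k : ℕ} {p : (Fin k → ℕ) → ℝ} (hp : ∀ x, 0 < p x)
    {g : (Fin k → ℕ) → ℝ}
    (hg : ∀ j : Fin k, Summable fun x : Fin k → ℕ => p x * |(x j : ℝ) * g x|) :
    Summable fun x => p x * g x := by
  refine Summable.of_norm_bounded_eventually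
    (summable_sum (s := Finset.univ) fun j _ => hg j) ?_
  refine Set.Finite.subset (Set.finite_singleton 0) fun x hx => ?_
  by_contra hx0
  obtain ⟨j, hj⟩ := Function.ne_iff.1 hx0
  refine hx ?_
  have h1 : (1 : ℝ) ≤ x j := by exact_mod_cast Nat.one_le_iff_ne_zero.2 hj
  calc ‖p x * g x‖ = p x * |g x| := by rw [Real.norm_eq_abs, abs_mul, abs_of_pos (hp x)]
    _ ≤ p x * |(x j : ℝ) * g x| := by
      refine mul_le_mul_of_nonneg_left ?_ (hp x).le
      rw [abs_mul, Nat.abs_cast]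
      exact le_mul_of_one_le_left (abs_nonneg _) h1
    _ ≤ ∑ i, p x * |(x i : ℝ) * g x| :=
      Finset.single_le_sum (f := fun i => p x * |(x i : ℝ) * g x|)
        (fun i _ => mul_nonneg (hp x).le (abs_nonneg _)) (Finset.mem_univ j)

/-- Functions growing at most quadratically are integrable. -/
lemma summable_of_le {k r : ℕ} (hr : 1 ≤ r) {θ : Fin k → ℝ}
    (hθ : ∀ i, 0 < θ i ∧ θ i < 1) (hθ0 : 0 < 1 - ∑ i, θ i) {f : (Fin k → ℕ) → ℝ}
    (hf0 : ∀ x, 0 ≤ f x)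
    (hf : ∀ x, f x ≤ ((r : ℝ) + ∑ j, (x j : ℝ)) * ((r : ℝ) + ∑ j, (x j : ℝ) + 1)) :
    Summable fun x => negMultPMF k r θ x * f x :=
  (summable_second_moment hr hθ hθ0).of_nonneg_of_le
    (fun x => mul_nonneg (pmf_pos hθ hθ0 x).le (hf0 x))
    fun x => mul_le_mul_of_nonneg_left (hf x) (pmf_pos hθ hθ0 x).le

lemma coord_le_total {k r : ℕ} (hr : 1 ≤ r) (x : Fin k → ℕ) (i : Fin k) :
    1 ≤ (r : ℝ) + ∑ j, (x j : ℝ) ∧ (x i : ℝ) ≤ (r : ℝ) + ∑ j, (x j : ℝ) := by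
  have h1 : (1 : ℝ) ≤ r := by exact_mod_cast hr
  have h2 : (0 : ℝ) ≤ ∑ j, (x j : ℝ) := Finset.sum_nonneg fun j _ => Nat.cast_nonneg _
  have h3 : (x i : ℝ) ≤ ∑ j, (x j : ℝ) :=
    Finset.single_le_sum (f := fun j => (x j : ℝ)) (fun j _ => Nat.cast_nonneg _)
      (Finset.mem_univ i)
  constructor <;> linarith

/-! ### Conditional moments -/

section Moments

variable {k r : ℕ} {θ : Fin k → ℝ} {L : Fin k} {n : ℕ}

lemma summable_const (hr : 1 ≤ r) (hθ : ∀ i, 0 < θ i ∧ θ i < 1) (hθ0 : 0 < 1 - ∑ i, θ i)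
    (i₀ : Fin k) : Summable fun x => negMultPMF k r θ x * 1 :=
  summable_of_le hr hθ hθ0 (fun _ => zero_le_one) fun x => by
    have := coord_le_total hr x i₀
    nlinarith

lemma summable_coord (hr : 1 ≤ r) (hθ : ∀ i, 0 < θ i ∧ θ i < 1) (hθ0 : 0 < 1 - ∑ i, θ i)
    (i : Fin k) : Summable fun x : Fin k → ℕ => negMultPMF k r θ x * (x i : ℝ) :=
  summable_of_le hr hθ hθ0 (fun _ => Nat.cast_nonneg _) fun x => by
    have := coord_le_total hr x i
    nlinarith

lemma summable_coord_mul (hr : 1 ≤ r) (hθ : ∀ i, 0 < θ i ∧ θ i < 1)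
    (hθ0 : 0 < 1 - ∑ i, θ i) (i j : Fin k) :
    Summable fun x : Fin k → ℕ => negMultPMF k r θ x * ((x i : ℝ) * (x j : ℝ)) :=
  summable_of_le hr hθ hθ0 (fun _ => by positivity) fun x => by
    have h1 := coord_le_total hr x i
    have h2 := coord_le_total hr x j
    calc (x i : ℝ) * (x j : ℝ)
        ≤ ((r : ℝ) + ∑ j, (x j : ℝ)) * ((r : ℝ) + ∑ j, (x j : ℝ)) :=
          mul_le_mul h1.2 h2.2 (Nat.cast_nonneg _) (by linarith)
      _ ≤ _ := mul_le_mul_of_nonneg_left (by linarith) (by linarith)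

lemma sum_erase_theta : ∑ i ∈ Finset.univ.erase L, θ i = ∑ i, θ i - θ L := by
  rw [← Finset.add_sum_erase _ θ (Finset.mem_univ L)]
  ring

/-- The conditional mean of `r + ∑ X_i` is `(r + n) / (θ₀ + θ_L)`. -/
lemma slice_total (hr : 1 ≤ r) (hθ : ∀ i, 0 < θ i ∧ θ i < 1) (hθ0 : 0 < 1 - ∑ i, θ i) :
    ((1 - ∑ i, θ i) + θ L) *
        sliceSum (negMultPMF k r θ) L n (fun x => (r : ℝ) + ∑ j, (x j : ℝ))
      = ((r : ℝ) + n) * sliceSum (negMultPMF k r θ) L n (fun _ => 1) := by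
  have h := slice_shift_sum (L := L) (n := n) hr (summable_const hr hθ hθ0 L)
    (fun i => by simpa using summable_coord hr hθ hθ0 i)
  simp only [mul_one] at h
  rw [← Finset.sum_mul, sum_erase_theta] at h
  linear_combination -h

/-- Ratio of the masses of two consecutive slices. -/
lemma slice_mass_succ (hr : 1 ≤ r) (hθ : ∀ i, 0 < θ i ∧ θ i < 1) (hθ0 : 0 < 1 - ∑ i, θ i) :
    ((1 - ∑ i, θ i) + θ L) * ((n : ℝ) + 1) *
        sliceSum (negMultPMF k r θ) L (n + 1) (fun _ => 1)
      = θ L * ((r : ℝ) + n) * sliceSum (negMultPMF k r θ) L n (fun _ => 1) := by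
  have h := slice_shift_last (θ := θ) (L := L) (n := n) hr (fun _ => 1)
  simp only [mul_one] at h
  have h' := slice_total (L := L) (n := n) hr hθ hθ0
  linear_combination -((1 - ∑ i, θ i) + θ L) * h + θ L * h'

lemma slice_coord (hr : 1 ≤ r) {i : Fin k} (hi : i ≠ L) :
    sliceSum (negMultPMF k r θ) L n (fun x => (x i : ℝ))
      = θ i * sliceSum (negMultPMF k r θ) L n (fun x => (r : ℝ) + ∑ j, (x j : ℝ)) := by
  simpa using (slice_shift (θ := θ) (n := n) hr hi (fun _ => 1)).symm

/-- The second moments, summed over one index. Applying the shift relations to `f = x_i` gives a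
linear equation for this sum; the extra `θ_i S_n(N)` is the diagonal contribution of
`x_i ∘ (· + e_i) = x_i + 1`. -/
lemma slice_coord_mul_sum (hr : 1 ≤ r) (hθ : ∀ i, 0 < θ i ∧ θ i < 1)
    (hθ0 : 0 < 1 - ∑ i, θ i) {i : Fin k} (hi : i ≠ L) :
    ((1 - ∑ i, θ i) + θ L) * ∑ j ∈ Finset.univ.erase L,
        sliceSum (negMultPMF k r θ) L n (fun x => (x i : ℝ) * (x j : ℝ))
      = θ i * ((∑ i, θ i - θ L) * ((r : ℝ) + n) + 1) *
        sliceSum (negMultPMF k r θ) L n (fun x => (r : ℝ) + ∑ j, (x j : ℝ)) := by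
  set S := sliceSum (negMultPMF k r θ) L n
  set T := ∑ j ∈ Finset.univ.erase L, S (fun x => (x i : ℝ) * (x j : ℝ)) with hT
  have hN : Summable fun x : Fin k → ℕ =>
      negMultPMF k r θ x * ((r : ℝ) + ∑ j, (x j : ℝ)) := by
    simpa using summable_total (r := r) (summable_const hr hθ hθ0 L)
      (fun i => by simpa using summable_coord hr hθ hθ0 i)
  have hNi : Summable fun x : Fin k → ℕ =>
      negMultPMF k r θ x * (((r : ℝ) + ∑ j, (x j : ℝ)) * (x i : ℝ)) :=
    summable_total (summable_coord hr hθ hθ0 i) fun j => summable_coord_mul hr hθ hθ0 j i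
  have hsum : T = S (fun x => ((r : ℝ) + ∑ j, (x j : ℝ)) * (x i : ℝ))
      - ((r : ℝ) + n) * S (fun x => (x i : ℝ)) := by
    have h := slice_shift_sum (L := L) (n := n) hr (summable_coord hr hθ hθ0 i)
      (fun j => summable_coord_mul hr hθ hθ0 j i)
    rw [Finset.sum_congr rfl fun j hj => slice_shift hr (Finset.ne_of_mem_erase hj)
      (fun x => (x i : ℝ))] at h
    rw [← h, hT]
    exact Finset.sum_congr rfl fun j _ => slice_congr fun x _ => mul_comm _ _
  have hterm : ∀ j ∈ Finset.univ.erase L, S (fun x => (x i : ℝ) * (x j : ℝ))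
      = θ j * S (fun x => ((r : ℝ) + ∑ j, (x j : ℝ)) * (x i : ℝ))
        + if j = i then θ i * S (fun x => (r : ℝ) + ∑ j, (x j : ℝ)) else 0 := by
    intro j hj
    have h := slice_shift (θ := θ) (n := n) hr (Finset.ne_of_mem_erase hj)
      (fun x => (x i : ℝ))
    have hcomm : S (fun x => (x i : ℝ) * (x j : ℝ)) = S (fun x => (x j : ℝ) * (x i : ℝ)) :=
      slice_congr fun x _ => mul_comm _ _
    refine hcomm.trans (h.symm.trans ?_)
    by_cases hji : j = i
    · subst hji
      simp only [Function.update_self, if_true]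
      rw [← mul_add, ← slice_add hNi hN]
      congr 1
      refine slice_congr fun x _ => ?_
      push_cast
      ring
    · simp [Function.update_of_ne (Ne.symm hji), hji, S]
  have hlin : T = (∑ i, θ i - θ L) * S (fun x => ((r : ℝ) + ∑ j, (x j : ℝ)) * (x i : ℝ))
      + θ i * S (fun x => (r : ℝ) + ∑ j, (x j : ℝ)) := by
    rw [hT, Finset.sum_congr rfl hterm, Finset.sum_add_distrib, ← Finset.sum_mul,
      sum_erase_theta, Finset.sum_ite_eq' _ i, if_pos (by simp [hi])]
  have hmean : S (fun x => (x i : ℝ)) = θ i * S (fun x => (r : ℝ) + ∑ j, (x j : ℝ)) :=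
    slice_coord hr hi
  rw [hmean] at hsum
  linear_combination hlin - (∑ i, θ i - θ L) * hsum

/-- The row sums `c_i` of the conditional covariance matrix. -/
lemma condCov_sum (hr : 1 ≤ r) (hθ : ∀ i, 0 < θ i ∧ θ i < 1)
    (hθ0 : 0 < 1 - ∑ i, θ i) {i : Fin k} (hi : i ≠ L) :
    ∑ j ∈ Finset.univ.erase L, condCov k (negMultPMF k r θ) L n
        (fun y => (y i : ℝ)) (fun y => (y j : ℝ))
      = θ i * ((r : ℝ) + n) / ((1 - ∑ i, θ i) + θ L) ^ 2 := by
  have hq : 0 < (1 - ∑ i, θ i) + θ L := add_pos hθ0 (hθ L).1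
  have hZ : 0 < sliceSum (negMultPMF k r θ) L n (fun _ => 1) :=
    slice_mass_pos (pmf_pos hθ hθ0) (by simpa using summable_const hr hθ hθ0 L) L n
  have hM := slice_total (L := L) (n := n) hr hθ hθ0
  have hT := slice_coord_mul_sum (n := n) hr hθ hθ0 hi
  have hm : ∑ j ∈ Finset.univ.erase L, condE k (negMultPMF k r θ) L n (fun y => (y j : ℝ))
      = (∑ i, θ i - θ L) *
        (sliceSum (negMultPMF k r θ) L n (fun x => (r : ℝ) + ∑ j, (x j : ℝ)) /
          sliceSum (negMultPMF k r θ) L n (fun _ => 1)) := by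
    rw [← sum_erase_theta, Finset.sum_mul]
    refine Finset.sum_congr rfl fun j hj => ?_
    rw [condE_eq, slice_coord hr (Finset.ne_of_mem_erase hj), mul_div_assoc]
  simp only [condCov]
  rw [Finset.sum_sub_distrib, ← Finset.mul_sum, hm, condE_eq, slice_coord hr hi]
  simp only [condE_eq]
  rw [← Finset.sum_div]
  set M := sliceSum (negMultPMF k r θ) L n (fun x => (r : ℝ) + ∑ j, (x j : ℝ))
  set Z := sliceSum (negMultPMF k r θ) L n (fun _ => 1)
  set T := ∑ j ∈ Finset.univ.erase L,
    sliceSum (negMultPMF k r θ) L n (fun x => (x i : ℝ) * (x j : ℝ))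
  have hs : ∑ i, θ i - θ L = 1 - ((1 - ∑ i, θ i) + θ L) := by ring
  rw [hs] at hT ⊢
  set q := (1 - ∑ i, θ i) + θ L
  have hM' : M = ((r : ℝ) + n) * Z / q := by
    rw [eq_div_iff hq.ne', ← hM, mul_comm]
  have hT' : T = θ i * ((1 - q) * ((r : ℝ) + n) + 1) * M / q := by
    rw [eq_div_iff hq.ne', ← hT, mul_comm]
  rw [hT', hM']
  field_simp
  ring

end Moments

/-! ### The difference identity -/

/-- For `X ~ NM_k(r, θ)` and every `x_k ≥ 0`:
`Δ_k E[g(X) | X_k = x_k] = E[w_{-k|k}(X) (Δ_k g(X) + α_k Σ_{i<k} c_{i|k} Δ_i g(X)) | X_k = x_k]`,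
with `α_k = (θ₀+θ_k)/(r + x_k)` and `c_{i|k} = Σ_{j<k} Cov(X_i, X_j | X_k = x_k)`. -/
theorem negative_multinomial_conditional_difference_identity
    (k r : ℕ) (hk : 2 ≤ k) (hr : 1 ≤ r) (θ : Fin k → ℝ)
    (hθ : ∀ i, 0 < θ i ∧ θ i < 1) (hθ0 : 0 < 1 - ∑ i, θ i)
    (g : (Fin k → ℕ) → ℝ)
    (hg : ∀ j : Fin k,
      Summable (fun x : Fin k → ℕ => negMultPMF k r θ x * |(x j : ℝ) * g x|))
    (hdg : ∀ i j : Fin k,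
      Summable (fun x : Fin k → ℕ => negMultPMF k r θ x * |(x j : ℝ) * fd g i x|))
    (xk : ℕ) :
    let L : Fin k := ⟨k - 1, by omega⟩
    condE k (negMultPMF k r θ) L (xk + 1) g - condE k (negMultPMF k r θ) L xk g
      = condE k (negMultPMF k r θ) L xk (fun x =>
          negCondW k r θ L x *
            (fd g L x +
              (((1 - ∑ i, θ i) + θ L) / ((r : ℝ) + (xk : ℝ))) *
                ∑ i ∈ Finset.univ.erase L,
                  (∑ j ∈ Finset.univ.erase L,
                      condCov k (negMultPMF k r θ) L xk
                        (fun y => (y i : ℝ)) (fun y => (y j : ℝ))) * fd g i x)) := by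
  intro L
  set p := negMultPMF k r θ with hp
  have hq : 0 < (1 - ∑ i, θ i) + θ L := add_pos hθ0 (hθ L).1
  have hR : 0 < (r : ℝ) + (xk : ℝ) := by
    have : (1 : ℝ) ≤ r := by exact_mod_cast hr
    positivity
  have hpos : ∀ x, 0 < p x := pmf_pos hθ hθ0
  have hone : Summable p := by simpa using summable_const hr hθ hθ0 L
  have hZ := slice_mass_pos hpos hone L xk
  have hZ' := slice_mass_pos hpos hone L (xk + 1)
  have hmass := slice_mass_succ (L := L) (n := xk) hr hθ hθ0
  have hg0 : Summable fun x => p x * g x := summable_of_coord hpos hg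
  have hgj : ∀ j, Summable fun x : Fin k → ℕ => p x * ((x j : ℝ) * g x) := fun j =>
    Summable.of_norm ((hg j).congr fun x => by
      rw [Real.norm_eq_abs, abs_mul (p x), abs_of_pos (hpos x)])
  have hNg : Summable fun x : Fin k → ℕ =>
      p x * (((r : ℝ) + ∑ j, (x j : ℝ)) * g x) := summable_total hg0 hgj
  have hNs : ∀ i, Summable fun x : Fin k → ℕ =>
      p x * (((r : ℝ) + ∑ j, (x j : ℝ)) * g (Function.update x i (x i + 1))) :=
    fun i => summable_shift hr (hθ i).1 (hgj i)
  have hNfd : ∀ i, Summable fun x : Fin k → ℕ =>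
      p x * (((r : ℝ) + ∑ j, (x j : ℝ)) * fd g i x) := fun i =>
    ((hNs i).sub hNg).congr fun x => by
      unfold fd
      ring
  have hSfd : ∀ i, sliceSum p L xk (fun x => ((r : ℝ) + ∑ j, (x j : ℝ)) * fd g i x)
      = sliceSum p L xk
          (fun x => ((r : ℝ) + ∑ j, (x j : ℝ)) * g (Function.update x i (x i + 1)))
        - sliceSum p L xk (fun x => ((r : ℝ) + ∑ j, (x j : ℝ)) * g x) := by
    intro i
    rw [eq_sub_iff_add_eq, ← slice_add (hNfd i) hNg]
    refine slice_congr fun x _ => ?_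
    unfold fd
    ring
  -- Inserting `α c_i = θ_i / q` turns the right-hand side into a combination of `S_n(N Δ_i g)`.
  have hrhs : sliceSum p L xk (fun x =>
          negCondW k r θ L x *
            (fd g L x +
              (((1 - ∑ i, θ i) + θ L) / ((r : ℝ) + (xk : ℝ))) *
                ∑ i ∈ Finset.univ.erase L,
                  (∑ j ∈ Finset.univ.erase L,
                      condCov k p L xk
                        (fun y => (y i : ℝ)) (fun y => (y j : ℝ))) * fd g i x))
      = ((r : ℝ) + xk)⁻¹ * (((1 - ∑ i, θ i) + θ L) *
          sliceSum p L xk (fun x => ((r : ℝ) + ∑ j, (x j : ℝ)) * fd g L x)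
        + ∑ i ∈ Finset.univ.erase L, θ i *
          sliceSum p L xk (fun x => ((r : ℝ) + ∑ j, (x j : ℝ)) * fd g i x)) := by
    have hmulS : ∀ (c : ℝ) i, Summable fun x : Fin k → ℕ =>
        p x * (c * (((r : ℝ) + ∑ j, (x j : ℝ)) * fd g i x)) := fun c i =>
      ((hNfd i).mul_left c).congr fun x => by ring
    rw [← slice_const_mul,
      Finset.sum_congr rfl fun i _ => (slice_const_mul (p := p) (L := L) (n := xk) (θ i)
        (fun x => ((r : ℝ) + ∑ j, (x j : ℝ)) * fd g i x)).symm,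
      ← slice_sum _ fun i _ => hmulS (θ i) i, ← slice_add (hmulS _ L), ← slice_const_mul]
    · refine slice_congr fun x hx => ?_
      have e1 : ∑ i ∈ Finset.univ.erase L,
          (∑ j ∈ Finset.univ.erase L,
            condCov k p L xk (fun y => (y i : ℝ)) (fun y => (y j : ℝ))) * fd g i x
          = ((r : ℝ) + xk) / ((1 - ∑ i, θ i) + θ L) ^ 2 *
            ∑ i ∈ Finset.univ.erase L, θ i * fd g i x := by
        rw [Finset.mul_sum]
        refine Finset.sum_congr rfl fun i hi => ?_
        rw [condCov_sum hr hθ hθ0 (Finset.ne_of_mem_erase hi)]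
        ring
      have e2 : ∑ i ∈ Finset.univ.erase L,
          θ i * (((r : ℝ) + ∑ j, (x j : ℝ)) * fd g i x)
          = ((r : ℝ) + ∑ j, (x j : ℝ)) * ∑ i ∈ Finset.univ.erase L, θ i * fd g i x := by
        rw [Finset.mul_sum]
        exact Finset.sum_congr rfl fun i _ => by ring
      rw [e1, e2, negCondW, hx]
      set q := (1 - ∑ i, θ i) + θ L
      field_simp
    · refine (summable_sum (s := Finset.univ.erase L) fun i _ => hmulS (θ i) i).congr fun x => ?_
      rw [Finset.mul_sum]
  have hlast := slice_shift_last (θ := θ) (L := L) (n := xk) hr g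
  have hothers := slice_shift_sum (L := L) (n := xk) hr hg0 hgj
  rw [condE_eq, condE_eq, condE_eq, hrhs]
  simp only [hSfd, mul_sub, Finset.sum_sub_distrib]
  rw [← Finset.sum_mul, hothers, sum_erase_theta]
  have hθL := (hθ L).1
  set q := (1 - ∑ i, θ i) + θ L with hqdef
  have hs : ∑ i, θ i - θ L = 1 - q := by rw [hqdef]; ring
  rw [hs]
  set Z := sliceSum p L xk (fun _ => 1)
  set Z' := sliceSum p L (xk + 1) (fun _ => 1)
  set A := sliceSum p L xk
    (fun x => ((r : ℝ) + ∑ j, (x j : ℝ)) * g (Function.update x L (x L + 1)))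
  have hA : A = ((xk : ℝ) + 1) * sliceSum p L (xk + 1) g / θ L := by
    rw [eq_div_iff hθL.ne', ← hlast, mul_comm]
  have hZeq : Z = q * ((xk : ℝ) + 1) * Z' / (θ L * ((r : ℝ) + xk)) := by
    rw [eq_div_iff (by positivity), hmass]
    ring
  rw [hA, hZeq]
  field_simp
  ring
end

section
/- Let k ≥ 2 and let X = (X_1,…,X_k) follow the negative multinomial distribution NM_k(r,θ). For every x = (x_1,…,x_k) ∈ ℕ^k, the conditional p.m.f.s satisfy p_{X_{-k}|X_k = x_k+1}(x_1,…,x_{k-1}) = p_{X_{-k}|X_k = x_k}(x_1,…,x_{k-1}) · w_{-k|k}(x), where X_{-k} := (X_1,…,X_{k-1}) and w_{-k|k} is the conditional negative multinomial w-function. -/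
/-!
Write `p` for the p.m.f. and `q x = (r + |x|) p(x)`, where `|x| = ∑ i, x i`. Raising one coordinate
multiplies the p.m.f. by an explicit factor: `(x_j + 1) p(x + e_j) = θ_j q(x)`.

Let `M(c)` and `A` be the sums of `p` and of `q` over the slice `{x_L = c}`. Shifting coordinate `L`
gives `(c + 1) M(c + 1) = θ_L A`. Expanding `r + |x| = (r + c) + ∑_{j ≠ L} x_j` on the slice and
shifting each coordinate `j ≠ L` gives `A = (r + c) M(c) + (∑_{j ≠ L} θ_j) A`. Hence
`(c + 1) (θ_0 + θ_L) M(c + 1) = θ_L (r + c) M(c)`, and dividing the recurrence for `p` at `j = L` by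
this one yields the claim, with no need for a closed form of the marginal.

The rearrangements need `q` to be summable: by the multinomial theorem its sum over `{|x| = n}` is a
constant times `(n + r).choose r * (∑ i, θ i) ^ n`, which is summable in `n`.
-/

open scoped BigOperators

/-- The marginal p.m.f. `P(X_L = xk)` of the `L`-th coordinate. -/
noncomputable def margPMF (k : ℕ) (p : (Fin k → ℕ) → ℝ) (L : Fin k) (xk : ℕ) : ℝ :=
  ∑' x : Fin k → ℕ, if x L = xk then p x else 0

lemma sum_update_succ {k : ℕ} (x : Fin k → ℕ) (j : Fin k) :
    ∑ i, Function.update x j (x j + 1) i = ∑ i, x i + 1 := by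
  rw [Finset.sum_update_of_mem (Finset.mem_univ j), ← Finset.add_sum_erase _ x (Finset.mem_univ j),
    Finset.sdiff_singleton_eq_erase]
  ring

lemma negMultPMF_update {k r : ℕ} (hr : 1 ≤ r) (θ : Fin k → ℝ) (x : Fin k → ℕ) (j : Fin k) :
    ((x j : ℝ) + 1) * negMultPMF k r θ (Function.update x j (x j + 1))
      = θ j * (((r : ℝ) + ∑ i, (x i : ℝ)) * negMultPMF k r θ x) := by
  obtain ⟨s, rfl⟩ : ∃ s, r = s + 1 := ⟨r - 1, by omega⟩
  have h1 : ∏ i, ((Function.update x j (x j + 1) i).factorial : ℝ)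
      = ((x j : ℝ) + 1) * ∏ i, ((x i).factorial : ℝ) := by
    rw [← Finset.mul_prod_erase _ _ (Finset.mem_univ j),
      ← Finset.mul_prod_erase _ (fun i => ((x i).factorial : ℝ)) (Finset.mem_univ j)]
    rw [Finset.prod_congr rfl (g := fun i => ((x i).factorial : ℝ))]
    · simp [Nat.factorial_succ]; ring
    · intro i hi
      simp [Function.update_of_ne (Finset.ne_of_mem_erase hi)]
  have h2 : ∏ i, θ i ^ (Function.update x j (x j + 1) i) = θ j * ∏ i, θ i ^ x i := by
    rw [← Finset.mul_prod_erase _ _ (Finset.mem_univ j),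
      ← Finset.mul_prod_erase _ (fun i => θ i ^ x i) (Finset.mem_univ j)]
    rw [Finset.prod_congr rfl (g := fun i => θ i ^ x i)]
    · simp [pow_succ]; ring
    · intro i hi
      simp [Function.update_of_ne (Finset.ne_of_mem_erase hi)]
  have h3 : s + 1 + (∑ i, x i + 1) - 1 = (s + ∑ i, x i) + 1 := by omega
  have h4 : s + 1 + ∑ i, x i - 1 = s + ∑ i, x i := by omega
  have hP : ∏ i, ((x i).factorial : ℝ) ≠ 0 :=
    Finset.prod_ne_zero_iff.2 fun i _ => by positivity
  have hx : (x j : ℝ) + 1 ≠ 0 := by positivity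
  have hs : ((s + 1 - 1).factorial : ℝ) ≠ 0 := by positivity
  unfold negMultPMF
  rw [sum_update_succ, h1, h2, h3, h4, Nat.factorial_succ]
  push_cast
  field_simp
  ring

lemma negMultPMF_nonneg {k r : ℕ} {θ : Fin k → ℝ} (hθ : ∀ i, 0 < θ i)
    (hθ0 : 0 < 1 - ∑ i, θ i) (x : Fin k → ℕ) : 0 ≤ negMultPMF k r θ x := by
  have := Finset.prod_nonneg fun i (_ : i ∈ Finset.univ) => (pow_pos (hθ i) (x i)).le
  unfold negMultPMF
  positivity

/-- The p.m.f. weighted by `r + |x|`, written so that the multinomial theorem applies on each level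
set of `|x|`. -/
lemma weighted_negMultPMF_eq {k r : ℕ} (hr : 1 ≤ r) (θ : Fin k → ℝ) (x : Fin k → ℕ) :
    ((r : ℝ) + ∑ i, (x i : ℝ)) * negMultPMF k r θ x
      = r * (1 - ∑ i, θ i) ^ r * (((∑ i, x i + r).choose r : ℝ) *
        ((Nat.multinomial Finset.univ x : ℝ) * ∏ i, θ i ^ x i)) := by
  obtain ⟨s, rfl⟩ : ∃ s, r = s + 1 := ⟨r - 1, by omega⟩
  have h4 : s + 1 + ∑ i, x i - 1 = s + ∑ i, x i := by omega
  have hP : ∏ i, ((x i).factorial : ℝ) ≠ 0 :=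
    Finset.prod_ne_zero_iff.2 fun i _ => by positivity
  have hs : (s.factorial : ℝ) ≠ 0 := by positivity
  have hm : (∏ i, ((x i).factorial : ℝ)) * (Nat.multinomial Finset.univ x : ℝ)
      = ((∑ i, x i).factorial : ℝ) := by
    exact_mod_cast Nat.multinomial_spec Finset.univ x
  have hc : ((∑ i, x i + (s + 1)).choose (s + 1) : ℝ) * ((∑ i, x i).factorial : ℝ)
      * (((s : ℝ) + 1) * s.factorial)
      = ((s : ℝ) + 1 + ∑ i, (x i : ℝ)) * ((s + ∑ i, x i).factorial : ℝ) := by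
    have h := Nat.add_choose_mul_factorial_mul_factorial (∑ i, x i) (s + 1)
    rw [show ∑ i, x i + (s + 1) = (s + ∑ i, x i) + 1 by ring, Nat.factorial_succ,
      Nat.factorial_succ] at h
    rw [show ∑ i, x i + (s + 1) = (s + ∑ i, x i) + 1 by ring]
    have h' := congrArg (Nat.cast (R := ℝ)) h
    push_cast at h'
    linear_combination h'
  unfold negMultPMF
  rw [h4, Nat.add_sub_cancel]
  rw [← hm] at hc
  push_cast
  field_simp
  linear_combination (-(∏ i, θ i ^ x i) * (1 - ∑ i, θ i) ^ (s + 1)) * hc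

lemma summable_weighted {k r : ℕ} (hr : 1 ≤ r) {θ : Fin k → ℝ} (hθ : ∀ i, 0 < θ i)
    (hθ0 : 0 < 1 - ∑ i, θ i) :
    Summable fun x : Fin k → ℕ => ((r : ℝ) + ∑ i, (x i : ℝ)) * negMultPMF k r θ x := by
  simp_rw [weighted_negMultPMF_eq hr]
  apply Summable.mul_left
  have hS : 0 ≤ ∑ i, θ i := Finset.sum_nonneg fun i _ => (hθ i).le
  have hg : Summable fun n : ℕ => ((n + r).choose r : ℝ) * (∑ i, θ i) ^ n :=
    summable_choose_mul_geometric_of_norm_lt_one r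
      (by rw [Real.norm_of_nonneg hS]; linarith)
  have h0 : ∀ x : Fin k → ℕ, 0 ≤ ((∑ i, x i + r).choose r : ℝ) *
        ((Nat.multinomial Finset.univ x : ℝ) * ∏ i, θ i ^ x i) := fun x => by
    have := Finset.prod_nonneg fun i (_ : i ∈ Finset.univ) => (pow_pos (hθ i) (x i)).le
    positivity
  refine summable_of_sum_le h0
    (c := ∑' n : ℕ, ((n + r).choose r : ℝ) * (∑ i, θ i) ^ n) fun u => ?_
  classical
  rw [← Finset.sum_fiberwise_of_maps_to (t := u.image fun x => ∑ i, x i)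
    (g := fun x => ∑ i, x i) fun x hx => Finset.mem_image_of_mem _ hx]
  refine le_trans (Finset.sum_le_sum fun n _ => ?_) (hg.sum_le_tsum _ fun n _ => by positivity)
  rw [Finset.sum_pow_eq_sum_piAntidiag, Finset.mul_sum]
  refine le_trans (Finset.sum_le_sum_of_subset_of_nonneg
    (t := Finset.piAntidiag Finset.univ n) ?_ fun x _ _ => h0 x) (le_of_eq ?_)
  · intro x hx
    simpa using (Finset.mem_filter.1 hx).2
  · refine Finset.sum_congr rfl fun x hx => ?_
    rw [(Finset.mem_piAntidiag.1 hx).1]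

/-- A sum over `ℕ^k` of a function vanishing where `x j = 0` can be reindexed by `x ↦ x + e_j`. -/
lemma tsum_shift {k : ℕ} (j : Fin k) (g : (Fin k → ℕ) → ℝ) (hg : ∀ x, x j = 0 → g x = 0) :
    ∑' x, g x = ∑' x, g (Function.update x j (x j + 1)) := by
  symm
  refine Function.Injective.tsum_eq (g := fun x : Fin k → ℕ => Function.update x j (x j + 1)) ?_ ?_
  · intro x y h
    ext i
    have := congrFun h i
    by_cases hi : i = j
    · subst hi; simpa using this
    · simpa [Function.update_of_ne hi] using this
  · intro x hx
    have hj : x j ≠ 0 := fun h => hx (hg x h)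
    refine ⟨Function.update x j (x j - 1), ?_⟩
    simp [Nat.sub_add_cancel (Nat.pos_of_ne_zero hj)]

/-- The marginal satisfies the one-dimensional negative binomial recurrence with success parameter
`θ_L / (θ_0 + θ_L)`. -/
lemma margPMF_succ {k r : ℕ} (hr : 1 ≤ r) {θ : Fin k → ℝ} (hθ : ∀ i, 0 < θ i)
    (hθ0 : 0 < 1 - ∑ i, θ i) (L : Fin k) (c : ℕ) :
    ((c : ℝ) + 1) * ((1 - ∑ i, θ i) + θ L) * margPMF k (negMultPMF k r θ) L (c + 1)
      = θ L * ((r : ℝ) + c) * margPMF k (negMultPMF k r θ) L c := by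
  set p := negMultPMF k r θ with hp
  set q : (Fin k → ℕ) → ℝ := fun x => ((r : ℝ) + ∑ i, (x i : ℝ)) * p x with hq
  have hp0 : ∀ x, 0 ≤ p x := negMultPMF_nonneg hθ hθ0
  have hqs : Summable q := summable_weighted hr hθ hθ0
  have hr' : (1 : ℝ) ≤ r := by exact_mod_cast hr
  have hps : Summable p := by
    refine Summable.of_nonneg_of_le hp0 (fun x => ?_) hqs
    have : (0 : ℝ) ≤ ∑ i, (x i : ℝ) := by positivity
    exact le_mul_of_one_le_left (hp0 x) (by linarith)
  have hxs : ∀ j, Summable fun x : Fin k → ℕ => (x j : ℝ) * p x := fun j => by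
    refine Summable.of_nonneg_of_le (fun x => mul_nonneg (by positivity) (hp0 x))
      (fun x => ?_) hqs
    have : (x j : ℝ) ≤ ∑ i, (x i : ℝ) :=
      Finset.single_le_sum (f := fun i => (x i : ℝ)) (fun i _ => by positivity) (Finset.mem_univ j)
    exact mul_le_mul_of_nonneg_right (by linarith) (hp0 x)
  have hslice : ∀ f : (Fin k → ℕ) → ℝ, Summable f →
      Summable fun x : Fin k → ℕ => if x L = c then f x else 0 :=
    fun f hf => by
      refine (hf.indicator {x : Fin k → ℕ | x L = c}).congr fun x => ?_
      simp [Set.indicator_apply]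
  set A : ℝ := ∑' x : Fin k → ℕ, if x L = c then q x else 0 with hA
  have hup : ∀ x j, ((x j : ℝ) + 1) * p (Function.update x j (x j + 1)) = θ j * q x :=
    fun x j => negMultPMF_update hr θ x j
  have h1 : ((c : ℝ) + 1) * margPMF k p L (c + 1) = θ L * A := by
    unfold margPMF
    rw [tsum_shift L _ (fun x hx => by simp [hx]), hA, ← tsum_mul_left, ← tsum_mul_left]
    refine tsum_congr fun x => ?_
    by_cases h : x L = c
    · have := hup x L
      rw [h] at this
      simpa [h] using this
    · simp [h]
  have hj : ∀ j ∈ Finset.univ.erase L,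
      (∑' x : Fin k → ℕ, if x L = c then (x j : ℝ) * p x else 0) = θ j * A := by
    intro j hj
    have hne : L ≠ j := (Finset.ne_of_mem_erase hj).symm
    rw [tsum_shift j _ (fun x hx => by simp [hx]), hA, ← tsum_mul_left]
    refine tsum_congr fun x => ?_
    by_cases h : x L = c
    · simp [Function.update_of_ne hne, h, ← hup]
    · simp [Function.update_of_ne hne, h]
  have h2 : A = ((r : ℝ) + c) * margPMF k p L c + ∑ j ∈ Finset.univ.erase L, θ j * A := by
    rw [← Finset.sum_congr rfl hj, ← Summable.tsum_finsetSum fun j _ => hslice _ (hxs j)]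
    unfold margPMF
    rw [← tsum_mul_left, ← Summable.tsum_add ((hslice _ hps).mul_left _)
      (summable_sum fun j _ => hslice _ (hxs j))]
    refine tsum_congr fun x => ?_
    by_cases h : x L = c
    · simp only [h, if_true, hq]
      rw [← Finset.add_sum_erase _ _ (Finset.mem_univ L), h, ← Finset.sum_mul]
      ring
    · simp [h]
  rw [← Finset.sum_mul] at h2
  rw [← Finset.add_sum_erase _ θ (Finset.mem_univ L)]
  linear_combination (1 - ∑ j ∈ Finset.univ.erase L, θ j) * h1 + θ L * h2

/-- For `X ~ NM_k(r, θ)` and every `x ∈ ℕ^k`: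
`p_{X_{-k}|X_k = x_k+1}(x_{-k}) = p_{X_{-k}|X_k = x_k}(x_{-k}) · w_{-k|k}(x)`. -/
theorem negative_multinomial_conditional_pmf_recurrence
    (k r : ℕ) (hk : 2 ≤ k) (hr : 1 ≤ r) (θ : Fin k → ℝ)
    (hθ : ∀ i, 0 < θ i ∧ θ i < 1) (hθ0 : 0 < 1 - ∑ i, θ i)
    (x : Fin k → ℕ) :
    let L : Fin k := ⟨k - 1, by omega⟩
    negMultPMF k r θ (Function.update x L (x L + 1)) / margPMF k (negMultPMF k r θ) L (x L + 1)
      = negMultPMF k r θ x / margPMF k (negMultPMF k r θ) L (x L) * negCondW k r θ L x := by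
  intro L
  have hθ' : ∀ i, 0 < θ i := fun i => (hθ i).1
  have hm := margPMF_succ hr hθ' hθ0 L (x L)
  have hu := negMultPMF_update hr θ x L
  have hr' : (0 : ℝ) < r := by exact_mod_cast hr
  have hc : (x L : ℝ) + 1 ≠ 0 := by positivity
  have hrc : (r : ℝ) + x L ≠ 0 := by positivity
  have hL : θ L ≠ 0 := (hθ' L).ne'
  have ht : (1 - ∑ i, θ i) + θ L ≠ 0 := (add_pos hθ0 (hθ' L)).ne'
  unfold negCondW
  generalize margPMF k (negMultPMF k r θ) L (x L + 1) = M' at *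
  generalize margPMF k (negMultPMF k r θ) L (x L) = M at *
  generalize negMultPMF k r θ (Function.update x L (x L + 1)) = P' at *
  generalize negMultPMF k r θ x = P at *
  generalize (1 - ∑ i, θ i) + θ L = t at *
  have hM' : M' = θ L * ((r : ℝ) + x L) * M / (((x L : ℝ) + 1) * t) := by
    rw [eq_div_iff (mul_ne_zero hc ht)]
    linear_combination hm
  have hP' : P' = θ L * (((r : ℝ) + ∑ i, (x i : ℝ)) * P) / ((x L : ℝ) + 1) := by
    rw [eq_div_iff hc]
    linear_combination hu
  -- If `M = 0` then `M' = 0` as well, and both sides vanish by the convention for division by zero.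
  rcases eq_or_ne M 0 with rfl | hM
  · simp [hM']
  · rw [hM', hP']
    field_simp
end
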